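/- Let F be an algebraically closed field and let M be an n×n matrix over F all of whose principal minors are nonzero. Then for every monic polynomial p(λ) of degree n over F, the set of diagonal matrices Z over F with det(λI − MZ) = p(λ) is finite and has at most n! elements (exactly n! when solutions are counted with multiplicities). -/

import Mathlib

open Matrix

/-!
Up to sign, the coefficients of the characteristic polynomial of `M * diagonal d` are weighted
elementary symmetric polynomials `f₁, …, fₙ` in `d`, the weights being the principal minors of `M`.

If a valuation is trivial on the weights, and `T ≠ ∅` is the set of variables of value `> 1`, then
the monomial `∏ i ∈ T, X i` strictly dominates all others in `f_{|T|}`. Hence the variables are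
integral over `F[f₁, …, fₙ]`, and `d ↦ (f₁(d), …, fₙ(d))` is surjective.

Each `f_k` has degree at most one in every variable. For a polynomial `θ` and large `D`, the
products of `θ ^ j`, `0 ≤ j ≤ n!`, with the polynomials of total degree `≤ D` in the `f_k` are
indexed by a space of dimension about `(n! + 1) * D ^ n / n!`, but lie in a space of dimension about
`D ^ n`. So `θ` has degree at most `n!` over `F[f₁, …, fₙ]`. Taking `θ` injective on a given finite
set of solutions, its values there are roots of a single specialised minimal polynomial, so there
are at most `n!` solutions.

The multiplicities in the statement are arbitrary positive integers with sum `n!`, so they exist as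
soon as there is at least one solution and there are at most `n!` of them.
-/

section Counting

open MvPolynomial

theorem finrank_restrictDegree (σ R : Type*) [Fintype σ] [CommSemiring R] [Nontrivial R] (m : ℕ) :
    Module.finrank R (restrictDegree σ R m) = (m + 1) ^ Fintype.card σ := by
  let e : {s : σ →₀ ℕ | ∀ i, s i ≤ m} ≃ (σ → Set.Iic m) :=
    (Finsupp.equivFunOnFinite.subtypeEquiv fun _ => Iff.rfl).trans
      (Equiv.subtypePiEquivPi (p := fun _ k => k ≤ m))
  rw [restrictDegree, Module.finrank_eq_nat_card_basis (basisRestrictSupport R _),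
    Nat.card_congr e, Nat.card_fun]
  simp

theorem finrank_restrictTotalDegree (σ R : Type*) [Fintype σ] [CommSemiring R] [Nontrivial R]
    (D : ℕ) :
    Module.finrank R (restrictTotalDegree σ R D) =
      (D + Fintype.card σ).choose (Fintype.card σ) := by
  classical
  have hsupp : {s : σ →₀ ℕ | (s.sum fun _ e => e) ≤ D} =
      (Finset.range (D + 1)).biUnion (Finset.univ : Finset σ).finsuppAntidiag := by
    ext s
    simp [Finset.mem_finsuppAntidiag, Finsupp.sum_fintype]
  have hdisj : ((Finset.range (D + 1) : Finset ℕ) : Set ℕ).PairwiseDisjoint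
      fun k => (Finset.univ : Finset σ).finsuppAntidiag k := fun k _ l _ hkl =>
    Finset.disjoint_left.2 fun s hk hl =>
      hkl ((Finset.mem_finsuppAntidiag.1 hk).1.symm.trans (Finset.mem_finsuppAntidiag.1 hl).1)
  rw [restrictTotalDegree, Module.finrank_eq_nat_card_basis (basisRestrictSupport R _), hsupp,
    Nat.card_coe_set_eq, Set.ncard_coe_finset, Finset.card_biUnion hdisj]
  simp only [Finset.card_finsuppAntidiag_nat_eq_multichoose, Finset.card_univ,
    Nat.sum_range_multichoose]

theorem succ_pow_le_factorial_mul_choose (D n : ℕ) : (D + 1) ^ n ≤ n.factorial * (D + n).choose n :=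
  (Nat.pow_succ_le_ascFactorial (D + 1) n).trans_eq (Nat.ascFactorial_eq_factorial_mul_choose D n)

theorem exists_mul_pow_lt (N m c n : ℕ) :
    ∃ D : ℕ, N * (m * D + c) ^ n < (N * m ^ n + 1) * (D + 1) ^ n := by
  have hlim : Filter.Tendsto (fun D : ℕ => N * (m + c * (1 / ((D : ℝ) + 1))) ^ n)
      Filter.atTop (nhds (N * (m + c * 0) ^ n)) :=
    ((tendsto_one_div_add_atTop_nhds_zero_nat.const_mul _).const_add _).pow n |>.const_mul _
  obtain ⟨D, hD⟩ := (hlim.eventually_lt_const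
    (show (N : ℝ) * (m + c * 0) ^ n < N * m ^ n + 1 by simp)).exists
  have hbound : (N : ℝ) * (m * D + c) ^ n < (N * m ^ n + 1) * (D + 1) ^ n :=
    calc (N : ℝ) * (m * D + c) ^ n ≤ N * (m * (D + 1) + c) ^ n := by gcongr; simp
      _ = N * (m + c * (1 / ((D : ℝ) + 1))) ^ n * (D + 1) ^ n := by
        rw [mul_assoc, ← mul_pow]
        field_simp
      _ < _ := by gcongr
  exact ⟨D, mod_cast hbound⟩

theorem exists_finrank_restrictDegree_lt (σ R : Type*) [Fintype σ] [CommSemiring R] [Nontrivial R]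
    (m c : ℕ) :
    ∃ D : ℕ, Module.finrank R (restrictDegree σ R (m * D + c)) <
      ((Fintype.card σ).factorial * m ^ Fintype.card σ + 1) *
        Module.finrank R (restrictTotalDegree σ R D) := by
  set n := Fintype.card σ with hn
  obtain ⟨D, hD⟩ := exists_mul_pow_lt n.factorial m (c + 1) n
  refine ⟨D, lt_of_mul_lt_mul_left (a := n.factorial) ?_ (Nat.zero_le _)⟩
  rw [finrank_restrictDegree, finrank_restrictTotalDegree, ← hn]
  calc n.factorial * (m * D + c + 1) ^ n
      < (n.factorial * m ^ n + 1) * (D + 1) ^ n := hD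
    _ ≤ (n.factorial * m ^ n + 1) * (n.factorial * (D + n).choose n) := by
      gcongr
      exact succ_pow_le_factorial_mul_choose D n
    _ = _ := mul_left_comm _ _ _

end Counting

section Relation

open MvPolynomial

variable {σ τ R F : Type*}

theorem degreeOf_aeval_le [CommSemiring R] {f : τ → MvPolynomial σ R} {m : ℕ} {i : σ}
    (hf : ∀ k, (f k).degreeOf i ≤ m) (g : MvPolynomial τ R) :
    (aeval f g).degreeOf i ≤ m * g.totalDegree := by
  rw [aeval_def, eval₂_eq]
  refine (degreeOf_sum_le _ _ _).trans (Finset.sup_le fun s hs => ?_)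
  calc (C (g.coeff s) * ∏ k ∈ s.support, f k ^ s k).degreeOf i
      ≤ ∑ k ∈ s.support, (f k ^ s k).degreeOf i :=
        (degreeOf_C_mul_le _ _ _).trans (degreeOf_prod_le _ _ _)
    _ ≤ ∑ k ∈ s.support, m * s k := Finset.sum_le_sum fun k _ =>
        (degreeOf_pow_le _ _ _).trans ((Nat.mul_le_mul_left _ (hf k)).trans_eq (mul_comm _ _))
    _ ≤ m * g.totalDegree := by
        rw [← Finset.mul_sum]
        exact Nat.mul_le_mul_left _ (le_totalDegree hs)

theorem aeval_mul_pow_mem_restrictDegree [CommSemiring R] {f : τ → MvPolynomial σ R} {m : ℕ}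
    (hf : ∀ k i, (f k).degreeOf i ≤ m) (θ : MvPolynomial σ R) {g : MvPolynomial τ R} {D j N : ℕ}
    (hg : g.totalDegree ≤ D) (hj : j ≤ N) :
    aeval f g * θ ^ j ∈ restrictDegree σ R (m * D + N * θ.totalDegree) := by
  rw [mem_restrictDegree]
  refine fun s hs i => degreeOf_le_iff.1 ?_ s hs
  calc (aeval f g * θ ^ j).degreeOf i
      ≤ (aeval f g).degreeOf i + (θ ^ j).degreeOf i := degreeOf_mul_le _ _ _
    _ ≤ m * g.totalDegree + j * θ.totalDegree := by
      gcongr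
      · exact degreeOf_aeval_le (fun k => hf k i) g
      · exact (degreeOf_pow_le _ _ _).trans (by gcongr; exact degreeOf_le_totalDegree _ _)
    _ ≤ _ := by gcongr

theorem exists_ne_zero_sum_aeval_mul_pow_eq_zero [Field F] [Fintype σ] {f : σ → MvPolynomial σ F}
    {m : ℕ} (hf : ∀ k i, (f k).degreeOf i ≤ m) (θ : MvPolynomial σ F) :
    ∃ g : Fin ((Fintype.card σ).factorial * m ^ Fintype.card σ + 1) → MvPolynomial σ F,
      g ≠ 0 ∧ ∑ j : Fin _, aeval f (g j) * θ ^ (j : ℕ) = 0 := by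
  set N := (Fintype.card σ).factorial * m ^ Fintype.card σ
  obtain ⟨D, hD⟩ := exists_finrank_restrictDegree_lt σ F m (N * θ.totalDegree)
  let V := restrictTotalDegree σ F D
  let W := restrictDegree σ F (m * D + N * θ.totalDegree)
  let mulPow (j : Fin (N + 1)) : V →ₗ[F] W :=
    (LinearMap.mulRight F (θ ^ (j : ℕ)) ∘ₗ (aeval f).toLinearMap ∘ₗ V.subtype).codRestrict W
      fun g => aeval_mul_pow_mem_restrictDegree hf θ ((mem_restrictTotalDegree _ _ _).1 g.2)
        (Nat.le_of_lt_succ j.2)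
  let L : (Fin (N + 1) → V) →ₗ[F] W := ∑ j, mulPow j ∘ₗ LinearMap.proj j
  have hker : LinearMap.ker L ≠ ⊥ := LinearMap.ker_ne_bot_of_finrank_lt
    (by simpa [Module.finrank_pi_fintype, V, W] using hD)
  obtain ⟨g, hg, hg0⟩ := (Submodule.ne_bot_iff _).1 hker
  refine ⟨fun j => g j, fun h => hg0 (funext fun j => Subtype.ext (congrFun h j)), ?_⟩
  simpa [L, mulPow] using congrArg Subtype.val (LinearMap.mem_ker.1 hg)

end Relation

section Fibres

open MvPolynomial

variable {σ F : Type*} [Field F] {f : σ → MvPolynomial σ F}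

theorem algebraicIndependent_of_isIntegral_adjoin_range [Finite σ]
    [Algebra.IsIntegral (Algebra.adjoin F (Set.range f)) (MvPolynomial σ F)] :
    AlgebraicIndependent F f :=
  (Algebra.IsAlgebraic.isTranscendenceBasis_of_lift_le_trdeg_of_finite F f
    (by simp [MvPolynomial.trdeg_of_isDomain])).1

theorem natDegree_minpoly_adjoin_range_le [Fintype σ] {m : ℕ}
    (hf : ∀ k i, (f k).degreeOf i ≤ m)
    [Algebra.IsIntegral (Algebra.adjoin F (Set.range f)) (MvPolynomial σ F)]
    (θ : MvPolynomial σ F) :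
    (minpoly (Algebra.adjoin F (Set.range f)) θ).natDegree ≤
      (Fintype.card σ).factorial * m ^ Fintype.card σ := by
  have hind : AlgebraicIndependent F f := algebraicIndependent_of_isIntegral_adjoin_range
  let e := hind.aevalEquiv
  have : IsIntegrallyClosed (Algebra.adjoin F (Set.range f)) := .of_equiv e.toRingEquiv
  obtain ⟨g, hg, hrel⟩ := exists_ne_zero_sum_aeval_mul_pow_eq_zero hf θ
  let q := ∑ j : Fin _, Polynomial.monomial (j : ℕ) (e (g j))
  have hq : q ≠ 0 := fun h => hg <| funext fun j => by
    simpa [q, Polynomial.finsetSum_coeff, Polynomial.coeff_monomial, Fin.val_inj] using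
      congrArg (Polynomial.coeff · (j : ℕ)) h
  have hqθ : Polynomial.aeval θ q = 0 := by
    simpa [q, e, Polynomial.aeval_monomial, hind.algebraMap_aevalEquiv] using hrel
  calc (minpoly _ θ).natDegree ≤ q.natDegree :=
        Polynomial.natDegree_le_natDegree (minpoly.IsIntegrallyClosed.degree_le_of_ne_zero hq hqθ)
    _ ≤ _ := Polynomial.natDegree_sum_le_of_forall_le _ _ fun j _ =>
        (Polynomial.natDegree_monomial_le _).trans (Nat.le_of_lt_succ j.2)

theorem exists_injOn_eval [Infinite F] (T : Finset (σ → F)) :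
    ∃ θ : MvPolynomial σ F, Set.InjOn (fun d => eval d θ) T := by
  classical
  obtain ⟨θ, hθ⟩ := Module.Dual.exists_forall_ne_zero_of_forall_exists (K := F)
    (fun p : T.offDiag => (aeval p.1.1).toLinearMap - (aeval p.1.2).toLinearMap) fun p => by
      obtain ⟨i, hi⟩ := Function.ne_iff.1 (Finset.mem_offDiag.1 p.2).2.2
      exact ⟨X i, by simpa [sub_eq_zero] using hi⟩
  refine ⟨θ, fun a ha b hb hab => by_contra fun hne => ?_⟩
  exact hθ ⟨(a, b), Finset.mem_offDiag.2 ⟨ha, hb, hne⟩⟩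
    (by simpa [sub_eq_zero, aeval_eq_eval] using hab)

theorem card_le_of_forall_eval_eq [Infinite F] [Fintype σ] {m : ℕ}
    (hf : ∀ k i, (f k).degreeOf i ≤ m)
    [Algebra.IsIntegral (Algebra.adjoin F (Set.range f)) (MvPolynomial σ F)]
    {c : σ → F} {T : Finset (σ → F)} (hT : ∀ d ∈ T, ∀ k, eval d (f k) = c k) :
    T.card ≤ (Fintype.card σ).factorial * m ^ Fintype.card σ := by
  classical
  obtain rfl | ⟨d₀, hd₀⟩ := T.eq_empty_or_nonempty
  · simp
  obtain ⟨θ, hθ⟩ := exists_injOn_eval T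
  let A := Algebra.adjoin F (Set.range f)
  let φ : (σ → F) → A →ₐ[F] F := fun d => (aeval d).comp A.val
  have hφ (d) (hd : d ∈ T) : φ d = φ d₀ := AlgHom.adjoin_ext <| by
    rintro _ ⟨k, rfl⟩
    simp [φ, hT d hd k, hT d₀ hd₀ k, aeval_eq_eval]
  let r := (minpoly A θ).map (φ d₀ : A →+* F)
  have hr : r ≠ 0 := ((minpoly.monic (Algebra.IsIntegral.isIntegral θ)).map _).ne_zero
  have hroot (d) (hd : d ∈ T) : eval d θ ∈ r.roots.toFinset := by
    rw [Multiset.mem_toFinset, Polynomial.mem_roots hr, Polynomial.IsRoot, Polynomial.eval_map,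
      ← hφ d hd]
    have := Polynomial.hom_eval₂ (minpoly A θ) (algebraMap A _) (eval d) θ
    rw [← Polynomial.aeval_def, minpoly.aeval, map_zero] at this
    exact this.symm
  calc T.card = (T.image fun d => eval d θ).card := (Finset.card_image_of_injOn hθ).symm
    _ ≤ r.roots.toFinset.card := Finset.card_le_card (Finset.image_subset_iff.2 hroot)
    _ ≤ r.natDegree := (Multiset.toFinset_card_le _).trans (Polynomial.card_roots' _)
    _ ≤ (minpoly A θ).natDegree := Polynomial.natDegree_map_le
    _ ≤ _ := natDegree_minpoly_adjoin_range_le hf θ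

theorem encard_setOf_forall_eval_eq_le [Infinite F] [Fintype σ] {m : ℕ}
    (hf : ∀ k i, (f k).degreeOf i ≤ m)
    [Algebra.IsIntegral (Algebra.adjoin F (Set.range f)) (MvPolynomial σ F)] (c : σ → F) :
    {d : σ → F | ∀ k, eval d (f k) = c k}.encard ≤
      ((Fintype.card σ).factorial * m ^ Fintype.card σ : ℕ) := by
  by_contra! hlt
  obtain ⟨T, hT, hcard⟩ := Set.exists_subset_encard_eq (Order.add_one_le_of_lt hlt)
  have hfin : T.Finite := Set.finite_of_encard_eq_coe (k := _ + 1) (mod_cast hcard)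
  lift T to Finset (σ → F) using hfin
  have := card_le_of_forall_eval_eq hf hT
  rw [Set.encard_coe_eq_coe_finsetCard] at hcard
  norm_cast at hcard
  omega

theorem surjective_eval [IsAlgClosed F] [Finite σ]
    [Algebra.IsIntegral (Algebra.adjoin F (Set.range f)) (MvPolynomial σ F)] :
    Function.Surjective fun (d : σ → F) k => eval d (f k) := by
  intro c
  have hind : AlgebraicIndependent F f := algebraicIndependent_of_isIntegral_adjoin_range
  let φ : Algebra.adjoin F (Set.range f) →ₐ[F] F := (aeval c).comp hind.aevalEquiv.symm.toAlgHom
  have : (RingHom.ker φ).IsMaximal := RingHom.ker_isMaximal_of_surjective φ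
    fun a => ⟨algebraMap F _ a, φ.commutes a⟩
  have hbot : RingHom.ker (algebraMap (Algebra.adjoin F (Set.range f)) (MvPolynomial σ F)) = ⊥ :=
    (RingHom.injective_iff_ker_eq_bot _).1 (FaithfulSMul.algebraMap_injective _ _)
  obtain ⟨Q, hQ, hQφ⟩ := Ideal.exists_ideal_over_maximal_of_isIntegral
    (S := MvPolynomial σ F) (RingHom.ker φ) (hbot.trans_le bot_le)
  obtain ⟨d, rfl⟩ := isMaximal_iff_eq_vanishingIdeal_singleton.1 hQ
  refine ⟨d, funext fun k => ?_⟩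
  have hker : hind.aevalEquiv (X k - C (c k)) ∈ RingHom.ker φ := by simp [φ]
  rw [← hQφ, Ideal.mem_comap, hind.algebraMap_aevalEquiv] at hker
  simpa [mem_vanishingIdeal_singleton_iff, sub_eq_zero, aeval_eq_eval] using hker

end Fibres

section WeightedEsymm

open MvPolynomial

variable {ι R B : Type*}

/-- The elementary symmetric polynomial of degree `k` with the coefficient of each squarefree
monomial `∏ i ∈ S, X i` replaced by `w S`. -/
noncomputable def weightedEsymm [CommSemiring R] [Fintype ι] (w : Finset ι → R) (k : ℕ) :
    MvPolynomial ι R :=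
  ∑ S ∈ Finset.univ.powersetCard k, C (w S) * ∏ i ∈ S, X i

theorem aeval_weightedEsymm [CommSemiring R] [Fintype ι] [CommSemiring B] [Algebra R B]
    (w : Finset ι → R) (k : ℕ) (z : ι → B) :
    aeval z (weightedEsymm w k) = ∑ S ∈ Finset.univ.powersetCard k, w S • ∏ i ∈ S, z i := by
  simp [weightedEsymm, Algebra.smul_def]

theorem degreeOf_weightedEsymm_le [CommSemiring R] [Fintype ι] (w : Finset ι → R) (k : ℕ) (i : ι) :
    (weightedEsymm w k).degreeOf i ≤ 1 := by
  classical
  refine (degreeOf_sum_le _ _ _).trans (Finset.sup_le fun S _ => ?_)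
  refine (degreeOf_C_mul_le _ _ _).trans ((degreeOf_prod_le _ _ _).trans ?_)
  obtain _ | _ := subsingleton_or_nontrivial R
  · simp [Subsingleton.elim (X _ : MvPolynomial ι R) 0]
  · simp only [degreeOf_X, Finset.sum_ite_eq]
    split_ifs <;> simp

theorem prod_lt_prod_of_not_subset {Γ : Type*} [LinearOrderedCommGroupWithZero Γ] {g : ι → Γ}
    {S T : Finset ι} (hT : ∀ i ∈ T, 1 < g i) (hTc : ∀ i ∉ T, g i ≤ 1) (h : ¬ T ⊆ S) :
    ∏ i ∈ S, g i < ∏ i ∈ T, g i := by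
  classical
  obtain ⟨j, hjT, hjS⟩ := Finset.not_subset.1 h
  calc ∏ i ∈ S, g i = (∏ i ∈ S ∩ T, g i) * ∏ i ∈ S \ T, g i :=
        (Finset.prod_inter_mul_prod_sdiff S T g).symm
    _ ≤ ∏ i ∈ S ∩ T, g i := mul_le_of_le_one_right' <|
        Finset.prod_le_one' fun i hi => hTc i (Finset.mem_sdiff.1 hi).2
    _ = ∏ i ∈ T, if i ∈ S then g i else 1 := by rw [Finset.prod_ite_mem, Finset.inter_comm]
    _ < ∏ i ∈ T, g i := by
      refine Finset.prod_lt_prod (fun i hi => ?_) (fun i hi => ?_) ⟨j, hjT, by simp [hjS, hT j hjT]⟩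
      · split_ifs
        exacts [zero_lt_one.trans (hT i hi), zero_lt_one]
      · split_ifs
        exacts [le_rfl, (hT i hi).le]

theorem valuation_le_one_of_weightedEsymm_le_one [Fintype ι] [CommRing B] {Γ : Type*}
    [LinearOrderedCommGroupWithZero Γ] (v : Valuation B Γ) {w : Finset ι → B}
    (hw : ∀ S, v (w S) = 1) {z : ι → B}
    (h : ∀ k < Fintype.card ι, v (aeval z (weightedEsymm w (k + 1))) ≤ 1) (i : ι) :
    v (z i) ≤ 1 := by
  classical
  by_contra! hi
  let T : Finset ι := {j | 1 < v (z j)}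
  have hT : ∀ j ∈ T, 1 < v (z j) := by simp [T]
  have hiT : i ∈ T := by simpa [T] using hi
  have hval (S : Finset ι) : v (w S • ∏ j ∈ S, z j) = ∏ j ∈ S, v (z j) := by
    rw [smul_eq_mul, map_mul, hw, one_mul, map_prod]
  have hdom : v (aeval z (weightedEsymm w T.card)) = ∏ j ∈ T, v (z j) := by
    rw [aeval_weightedEsymm, v.map_sum_eq_of_lt (j := T) (by simp), hval]
    intro S hS
    obtain ⟨hcard, hne⟩ : S.card = T.card ∧ S ≠ T := by simpa using hS
    rw [hval, hval]
    exact prod_lt_prod_of_not_subset hT (by simp [T])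
      fun hTS => hne (Finset.eq_of_subset_of_card_le hTS hcard.le).symm
  have hlt : 1 < ∏ j ∈ T, v (z j) := by
    simpa using prod_lt_prod_of_not_subset (S := ∅) hT (by simp [T])
      fun hsub => Finset.notMem_empty i (hsub hiT)
  obtain ⟨k, hk⟩ := Nat.exists_eq_succ_of_ne_zero (Finset.card_ne_zero_of_mem hiT)
  have hle := h k (Nat.succ_le_iff.1 (hk ▸ Finset.card_le_univ T))
  rw [← Nat.succ_eq_add_one, ← hk, hdom] at hle
  exact hle.not_gt hlt

theorem isIntegral_of_isIntegral_weightedEsymm [CommRing R] [CommRing B] [IsDomain B] [Algebra R B]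
    [Fintype ι] {w : Finset ι → R} (hw : ∀ S, IsUnit (w S)) {z : ι → B}
    (h : ∀ k < Fintype.card ι, IsIntegral R (aeval z (weightedEsymm w (k + 1)))) (i : ι) :
    IsIntegral R (z i) := by
  let K := FractionRing B
  rw [← isIntegral_algebraMap_iff (IsFractionRing.injective B K)]
  by_contra hi
  obtain ⟨V, hV, hiV⟩ := Subring.exists_le_valuationSubring_of_isIntegrallyClosedIn
    (R := (integralClosure R K).toSubring) hi
  have hint (x : K) (hx : IsIntegral R x) : V.valuation x ≤ 1 :=
    (V.valuation_le_one_iff x).2 (hV hx)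
  have hunit (S) : V.valuation (algebraMap R K (w S)) = 1 := by
    obtain ⟨u, hu⟩ := hw S
    have hinv : V.valuation (algebraMap R K u) * V.valuation (algebraMap R K ↑u⁻¹) = 1 := by
      rw [← map_mul, ← map_mul, u.mul_inv, map_one, map_one]
    rw [← hu]
    refine le_antisymm (hint _ isIntegral_algebraMap) (hinv.symm.trans_le ?_)
    exact mul_le_of_le_one_right' (hint _ isIntegral_algebraMap)
  refine hiV ((V.valuation_le_one_iff _).1 ?_)
  refine valuation_le_one_of_weightedEsymm_le_one V.valuation hunit
    (z := fun i => algebraMap B K (z i)) (fun k hk => hint _ ?_) i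
  have := (h k hk).algebraMap (B := K)
  simpa [aeval_weightedEsymm, Algebra.smul_def, ← IsScalarTower.algebraMap_apply] using this

theorem isIntegral_of_weightedEsymm_mem [CommRing R] [IsDomain R] [Fintype ι] {w : Finset ι → R}
    (hw : ∀ S, IsUnit (w S)) {A : Subalgebra R (MvPolynomial ι R)}
    (hA : ∀ k < Fintype.card ι, weightedEsymm w (k + 1) ∈ A) :
    Algebra.IsIntegral A (MvPolynomial ι R) := by
  have hX (i : ι) : IsIntegral A (X i : MvPolynomial ι R) := by
    refine isIntegral_of_isIntegral_weightedEsymm (w := fun S => algebraMap R A (w S))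
      (fun S => (hw S).map _) (fun k hk => ?_) i
    have hmap : aeval X (weightedEsymm (fun S => algebraMap R A (w S)) (k + 1)) =
        weightedEsymm w (k + 1) := by
      simp [weightedEsymm]
    rw [hmap]
    exact isIntegral_algebraMap (R := A) (x := ⟨_, hA k hk⟩)
  refine ⟨fun p => ?_⟩
  induction p using MvPolynomial.induction_on with
  | C a => exact isIntegral_algebraMap (R := A) (x := algebraMap R A a)
  | add p q hp hq => exact hp.add hq
  | mul_X p i hp => exact hp.mul (hX i)

end WeightedEsymm

section PrincipalMinors

variable {ι R : Type*} [CommRing R]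

/-- The principal minor of `M` with rows and columns indexed by `S`. -/
def principalMinor [DecidableEq ι] (M : Matrix ι ι R) (S : Finset ι) : R :=
  (M.submatrix (Subtype.val : S → ι) Subtype.val).det

theorem det_submatrix_orderEmbOfFin [LinearOrder ι] (M : Matrix ι ι R) (S : Finset ι) :
    (M.submatrix (S.orderEmbOfFin rfl) (S.orderEmbOfFin rfl)).det = principalMinor M S := by
  rw [principalMinor, ← Matrix.det_submatrix_equiv_self (S.orderIsoOfFin rfl).toEquiv]
  rfl

theorem principalMinor_mul_diagonal [Fintype ι] [DecidableEq ι] (M : Matrix ι ι R) (d : ι → R)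
    (S : Finset ι) : principalMinor (M * diagonal d) S = principalMinor M S * ∏ i ∈ S, d i := by
  have hsub : (M * diagonal d).submatrix (Subtype.val : S → ι) (Subtype.val : S → ι) =
      M.submatrix Subtype.val Subtype.val * diagonal fun i : S => d i := by
    ext i j
    simp
  rw [principalMinor, hsub, det_mul, det_diagonal, Finset.prod_coe_sort S d, principalMinor]

theorem coeff_charpoly_mul_diagonal [Fintype ι] [DecidableEq ι] (M : Matrix ι ι R) (d : ι → R)
    {k : ℕ} (hk : k ≤ Fintype.card ι) :
    (M * diagonal d).charpoly.coeff (Fintype.card ι - k) =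
      (-1) ^ k * MvPolynomial.eval d (weightedEsymm (principalMinor M) k) := by
  rw [charpoly_coeff_eq_sum_minors _ _ hk, ← MvPolynomial.coe_aeval_eq_eval,
    RingHom.coe_coe, aeval_weightedEsymm]
  exact congrArg _ (Finset.sum_congr rfl fun S _ => principalMinor_mul_diagonal M d S)

theorem monic_eq_iff_forall_coeff {A : Type*} [Semiring A] {p q : Polynomial A} {n : ℕ}
    (hp : p.Monic) (hq : q.Monic) (hpn : p.natDegree = n) (hqn : q.natDegree = n) :
    p = q ↔ ∀ k < n, p.coeff (n - (k + 1)) = q.coeff (n - (k + 1)) := by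
  refine ⟨fun h k _ => h ▸ rfl, fun h => ?_⟩
  refine (Polynomial.ext_iff_natDegree_le hpn.le hqn.le).2 fun i hi => ?_
  obtain hin | hlt := hi.eq_or_lt
  · rw [hin, ← hpn, hp.coeff_natDegree, hpn, ← hqn, hq.coeff_natDegree]
  · simpa [show n - (n - 1 - i + 1) = i by lia] using h (n - 1 - i) (by lia)

theorem charpoly_mul_diagonal_eq_iff [Nontrivial R] [Fintype ι] [DecidableEq ι] (M : Matrix ι ι R)
    (d : ι → R) {p : Polynomial R} (hp : p.Monic) (hpn : p.natDegree = Fintype.card ι) :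
    (M * diagonal d).charpoly = p ↔ ∀ k < Fintype.card ι,
      MvPolynomial.eval d (weightedEsymm (principalMinor M) (k + 1)) =
        (-1) ^ (k + 1) * p.coeff (Fintype.card ι - (k + 1)) := by
  rw [monic_eq_iff_forall_coeff (charpoly_monic _) hp (charpoly_natDegree_eq_dim _) hpn]
  refine forall₂_congr fun k hk => ?_
  rw [coeff_charpoly_mul_diagonal M d (Nat.succ_le_of_lt hk)]
  obtain hsign | hsign := neg_one_pow_eq_or R (k + 1) <;> simp [hsign, neg_eq_iff_eq_neg]

end PrincipalMinors

theorem exists_pos_sum_eq {α : Type*} {s : Finset α} (hs : s.Nonempty) {N : ℕ} (hN : s.card ≤ N) :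
    ∃ mult : α → ℕ, (∀ a ∈ s, 0 < mult a) ∧ ∑ a ∈ s, mult a = N := by
  classical
  obtain ⟨a, ha⟩ := hs
  refine ⟨fun b => 1 + if b = a then N - s.card else 0, fun b _ => by positivity, ?_⟩
  simp [Finset.sum_add_distrib, ha, hN]

/-- Let `F` be an algebraically closed field and `M` an `n × n` matrix over `F` all of
whose principal minors are nonzero.  Then for every monic polynomial `p` of degree `n`,
the set of diagonal matrices `Z = diagonal d` with `det (λ I - M Z) = p(λ)` is finite
with at most `n!` elements; moreover the solutions carry (positive) multiplicities
summing to exactly `n!`. -/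
theorem multiplicative_inverse_eigenvalue_diagonal_count {F : Type*} [Field F]
    [IsAlgClosed F] {n : ℕ} (M : Matrix (Fin n) (Fin n) F)
    (hM : ∀ I : Finset (Fin n),
      (M.submatrix (I.orderEmbOfFin rfl) (I.orderEmbOfFin rfl)).det ≠ 0) :
    ∀ p : Polynomial F, p.Monic → p.natDegree = n →
      {d : Fin n → F | (M * Matrix.diagonal d).charpoly = p}.Finite ∧
      {d : Fin n → F | (M * Matrix.diagonal d).charpoly = p}.ncard ≤ Nat.factorial n ∧
      ∃ (s : Finset (Fin n → F)) (mult : (Fin n → F) → ℕ),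
        (↑s = {d : Fin n → F | (M * Matrix.diagonal d).charpoly = p}) ∧
        (∀ d ∈ s, 0 < mult d) ∧
        ∑ d ∈ s, mult d = Nat.factorial n := by
  intro p hp hpn
  let f : Fin n → MvPolynomial (Fin n) F := fun k => weightedEsymm (principalMinor M) (k + 1)
  have hdeg (k i : Fin n) : (f k).degreeOf i ≤ 1 := degreeOf_weightedEsymm_le _ _ i
  have hintegral : Algebra.IsIntegral (Algebra.adjoin F (Set.range f)) (MvPolynomial (Fin n) F) :=
    isIntegral_of_weightedEsymm_mem
      (fun S => (det_submatrix_orderEmbOfFin M S ▸ hM S : principalMinor M S ≠ 0).isUnit)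
      fun k hk => Algebra.subset_adjoin ⟨⟨k, by simpa using hk⟩, rfl⟩
  let c (k : Fin n) : F := (-1) ^ (k + 1 : ℕ) * p.coeff (n - (k + 1))
  have hfibre : {d | (M * diagonal d).charpoly = p} =
      {d | ∀ k, MvPolynomial.eval d (f k) = c k} := by
    ext d
    simp [charpoly_mul_diagonal_eq_iff M d hp (by simpa using hpn), Fin.forall_iff, f, c]
  have hle := encard_setOf_forall_eval_eq_le hdeg c
  rw [← hfibre, one_pow, mul_one, Fintype.card_fin, Set.encard_le_coe_iff_finite_ncard_le] at hle
  obtain ⟨s, hs⟩ := hle.1.exists_finset_coe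
  obtain ⟨d, hd⟩ := surjective_eval (f := f) c
  have hds : d ∈ s := by
    rw [← Finset.mem_coe, hs, hfibre]
    exact congrFun hd
  obtain ⟨mult, hpos, hsum⟩ := exists_pos_sum_eq ⟨d, hds⟩
    (N := n.factorial) (by simpa [← hs] using hle.2)
  exact ⟨hle.1, hle.2, s, mult, hs, hpos, hsum⟩
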